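/- arXiv:2603.05673 — 4 statements merged into one kernel-verified Lean document; each statement's English description precedes it below -/
import Mathlib

section
/- Let M₁, …, Mₙ be n×n real symmetric positive definite matrices. Then there exist an invertible n×n real matrix Z and positive scalars α₁, …, αₙ such that the matrices Tᵢ = αᵢ Zᵀ Mᵢ Z satisfy Trace(Tᵢ) = 1 for each i = 1, …, n and T₁ + T₂ + ⋯ + Tₙ = I, where I is the n×n identity matrix. -/
open Matrix

lemma aux_posDef {n : ℕ} (M : Fin n → Matrix (Fin n) (Fin n) ℝ)
    (hM : ∀ i, (M i).PosDef) (t : Fin n → ℝ) (ht : ∀ i, 0 ≤ t i) (j : Fin n) (hj : 0 < t j) :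
    (∑ i, t i • M i).PosDef := by
  rw [← Finset.add_sum_erase _ _ (Finset.mem_univ j)]
  exact ((hM j).smul hj).add_posSemidef
    (posSemidef_sum _ fun i _ => (hM i).posSemidef.smul (ht i))

lemma aux_max {n : ℕ} (hn : 0 < n) (M : Fin n → Matrix (Fin n) (Fin n) ℝ)
    (hM : ∀ i, (M i).PosDef) :
    ∃ t : Fin n → ℝ, (∀ i, 0 < t i) ∧ ∀ u : Fin n → ℝ, (∀ i, 0 < u i) →
      (∏ i, u i) * (∑ i, t i • M i).det ≤ (∏ i, t i) * (∑ i, u i • M i).det := by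
  haveI : Nonempty (Fin n) := ⟨⟨0, hn⟩⟩
  have hpd : ∀ t ∈ stdSimplex ℝ (Fin n), 0 < (∑ i, t i • M i).det := by
    intro t ht
    obtain ⟨j, hj⟩ : ∃ j, 0 < t j := by
      by_contra! h
      have := Finset.sum_nonpos (s := Finset.univ) (fun i _ => h i)
      rw [ht.2] at this
      linarith
    exact (aux_posDef M hM t ht.1 j hj).det_pos
  have hcont : ContinuousOn (fun t : Fin n → ℝ => (∏ i, t i) / (∑ i, t i • M i).det)
      (stdSimplex ℝ (Fin n)) := by
    apply ContinuousOn.div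
    · fun_prop
    · apply Continuous.continuousOn
      apply Continuous.matrix_det
      fun_prop
    · intro t ht
      exact (hpd t ht).ne'
  have key : ∀ u : Fin n → ℝ, (∀ i, 0 < u i) → ∃ c : ℝ, 0 < c ∧
      c • u ∈ stdSimplex ℝ (Fin n) := by
    intro u hu
    have hs : 0 < ∑ i, u i := Finset.sum_pos (fun i _ => hu i) Finset.univ_nonempty
    refine ⟨(∑ i, u i)⁻¹, inv_pos.2 hs, fun i => ?_, ?_⟩
    · exact mul_nonneg (inv_pos.2 hs).le (hu i).le
    · simp only [Pi.smul_apply, smul_eq_mul, ← Finset.mul_sum]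
      exact inv_mul_cancel₀ hs.ne'
  obtain ⟨c1, hc1, hm1⟩ := key (fun _ => 1) (fun _ => one_pos)
  obtain ⟨t, ht, hmax⟩ := (isCompact_stdSimplex ℝ (Fin n)).exists_isMaxOn ⟨_, hm1⟩ hcont
  have htp : ∀ i, 0 < t i := by
    have h1 := hmax hm1
    simp only [Set.mem_setOf_eq] at h1
    have h2 : 0 < (∏ i, t i) / (∑ i, t i • M i).det := by
      refine lt_of_lt_of_le (div_pos (Finset.prod_pos fun i _ => ?_) (hpd _ hm1)) h1
      simpa using hc1
    intro i
    refine lt_of_le_of_ne (ht.1 i) fun h => ?_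
    rw [Finset.prod_eq_zero (Finset.mem_univ i) h.symm] at h2
    simp at h2
  refine ⟨t, htp, fun u hu => ?_⟩
  obtain ⟨c, hc, hm⟩ := key u hu
  have h1 := hmax hm
  simp only [Set.mem_setOf_eq] at h1
  rw [div_le_div_iff₀ (hpd _ hm) (hpd _ ht)] at h1
  have e1 : ∏ i, (c • u) i = c ^ n * ∏ i, u i := by
    simp [Finset.prod_mul_distrib]
  have e2 : (∑ i, (c • u) i • M i).det = c ^ n * (∑ i, u i • M i).det := by
    have : ∑ i, (c • u) i • M i = c • ∑ i, u i • M i := by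
      simp [Finset.smul_sum, smul_smul]
    rw [this, det_smul]
    simp
  rw [e1, e2] at h1
  have hcn : 0 < c ^ n := pow_pos hc n
  nlinarith [h1]

open scoped MatrixOrder in
lemma aux_sqrt {n : ℕ} (S : Matrix (Fin n) (Fin n) ℝ) (hS : S.PosDef) :
    ∃ Z : Matrix (Fin n) (Fin n) ℝ, IsUnit Z ∧ Zᵀ * S * Z = 1 := by
  obtain ⟨B, hB, rfl⟩ := CStarAlgebra.isStrictlyPositive_iff_eq_star_mul_self.mp
        hS.isStrictlyPositive
  have hd : IsUnit B.det := (Matrix.isUnit_iff_isUnit_det B).1 hB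
  refine ⟨B⁻¹, (Matrix.isUnit_nonsing_inv_iff).2 hB, ?_⟩
  rw [star_eq_conjTranspose, conjTranspose_eq_transpose_of_trivial, ← Matrix.mul_assoc,
    ← transpose_mul, Matrix.mul_nonsing_inv _ hd, transpose_one, Matrix.one_mul,
    Matrix.mul_nonsing_inv _ hd]

lemma aux_deriv {n : ℕ} (A : Matrix (Fin n) (Fin n) ℝ) (a : ℝ) (ha : 0 < a)
    (h : ∀ s : ℝ, 0 < a + s → (a + s) / a ≤ (1 + s • A).det) : a * A.trace = 1 := by
  set q := (det (1 + (Polynomial.X : Polynomial ℝ) • A.map Polynomial.C)).divX.divX with hq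
  have hd : HasDerivAt (fun s : ℝ => 1 + A.trace * s + q.eval s * s ^ 2 - (a + s) / a)
      (A.trace - 1 / a) 0 := by
    have h1 := ((((hasDerivAt_id (0 : ℝ)).const_mul A.trace).const_add 1).add
      ((q.hasDerivAt 0).mul ((hasDerivAt_id (0 : ℝ)).pow 2))).sub
      (((hasDerivAt_id (0 : ℝ)).const_add a).div_const a)
    convert! h1 using 1
    simp
  have hmin : IsLocalMin (fun s : ℝ => 1 + A.trace * s + q.eval s * s ^ 2 - (a + s) / a) 0 := by
    have : ∀ᶠ s : ℝ in nhds 0, -a < s := lt_mem_nhds (by linarith)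
    filter_upwards [this] with s hs
    have := h s (by linarith)
    rw [det_one_add_smul, ← hq] at this
    simp only [mul_zero, add_zero, ne_eq, OfNat.ofNat_ne_zero, not_false_eq_true, zero_pow,
      div_self ha.ne', sub_self]
    linarith
  have := hmin.hasDerivAt_eq_zero hd
  field_simp at this
  linarith

/-- Barvinok's scaling lemma: for symmetric positive definite matrices
`M₁, …, Mₙ` there exist an invertible matrix `Z` and positive scalars
`α₁, …, αₙ` such that `Tᵢ = αᵢ Zᵀ Mᵢ Z` has trace `1` for each `i` and
`T₁ + ⋯ + Tₙ = I`. -/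
theorem stmt_1 (n : ℕ) (M : Fin n → Matrix (Fin n) (Fin n) ℝ)
    (hM : ∀ i, (M i).PosDef) :
    ∃ (Z : Matrix (Fin n) (Fin n) ℝ) (α : Fin n → ℝ),
      IsUnit Z ∧ (∀ i, 0 < α i) ∧
      (∀ i, (α i • (Zᵀ * M i * Z)).trace = 1) ∧
      ∑ i, α i • (Zᵀ * M i * Z) = (1 : Matrix (Fin n) (Fin n) ℝ) := by
  rcases Nat.eq_zero_or_pos n with rfl | hn
  · exact ⟨1, fun _ => 1, isUnit_one, fun _ => one_pos, fun i => i.elim0,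
      Subsingleton.elim _ _⟩
  obtain ⟨t, ht, hmax⟩ := aux_max hn M hM
  have hS := aux_posDef M hM t (fun i => (ht i).le) ⟨0, hn⟩ (ht _)
  obtain ⟨Z, hZ, hZS⟩ := aux_sqrt _ hS
  refine ⟨Z, t, hZ, ht, fun i => ?_, ?_⟩
  · rw [trace_smul, smul_eq_mul]
    apply aux_deriv _ _ (ht i)
    intro s hs
    have hu := hmax (Function.update t i (t i + s)) (by
      intro j
      by_cases hj : j = i
      · subst hj; simpa using hs
      · simpa [hj] using ht j)
    have e1 : ∏ j, Function.update t i (t i + s) j = (t i + s) / t i * ∏ j, t j := by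
      rw [Finset.prod_update_of_mem (Finset.mem_univ i),
        ← Finset.mul_prod_erase _ t (Finset.mem_univ i), ← Finset.erase_eq]
      have := (ht i).ne'
      field_simp
    have e2 : ∑ j, Function.update t i (t i + s) j • M j = ∑ j, t j • M j + s • M i := by
      rw [← Finset.add_sum_erase _ _ (Finset.mem_univ i),
        ← Finset.add_sum_erase _ (fun j => t j • M j) (Finset.mem_univ i)]
      have : ∑ j ∈ Finset.univ.erase i, Function.update t i (t i + s) j • M j
          = ∑ j ∈ Finset.univ.erase i, t j • M j := by
        refine Finset.sum_congr rfl fun j hj => ?_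
        rw [Function.update_of_ne (Finset.ne_of_mem_erase hj)]
      rw [this, Function.update_self, add_smul]
      abel
    rw [e1, e2] at hu
    have hP : 0 < ∏ j, t j := Finset.prod_pos fun j _ => ht j
    have hu2 : (t i + s) / t i * (∑ j, t j • M j).det ≤ (∑ j, t j • M j + s • M i).det := by
      refine le_of_mul_le_mul_left ?_ hP
      linarith
    have e3 : (1 : Matrix (Fin n) (Fin n) ℝ) + s • (Zᵀ * M i * Z)
        = Zᵀ * (∑ j, t j • M j + s • M i) * Z := by
      rw [Matrix.mul_add, Matrix.add_mul, hZS]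
      simp
    have e4 : Z.det ^ 2 * (∑ j, t j • M j).det = 1 := by
      have := congrArg det hZS
      rw [det_mul, det_mul, det_transpose, det_one] at this
      linarith
    rw [e3, det_mul, det_mul, det_transpose]
    have := mul_le_mul_of_nonneg_left hu2 (sq_nonneg Z.det)
    calc (t i + s) / t i = (t i + s) / t i * (Z.det ^ 2 * (∑ j, t j • M j).det) := by
          rw [e4, mul_one]
      _ ≤ _ := by linarith
  · rw [← hZS, Matrix.mul_sum, Matrix.sum_mul]
    simp
end

section
/- Let Q₁, …, Qₙ be n×n real symmetric positive definite matrices. Then the function f : ℝⁿ → ℝ defined by f(t₁, …, tₙ) = log det(e^{t₁} Q₁ + e^{t₂} Q₂ + ⋯ + e^{tₙ} Qₙ) is convex on ℝⁿ. -/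
open Matrix

theorem aux_jensen {n : ℕ} (P : Fin n → Matrix (Fin n) (Fin n) ℝ)
    (hP : ∀ i, (P i).PosSemidef) (h1 : ∑ i, P i = 1) (t : Fin n → ℝ)
    (hS : (∑ i, Real.exp (t i) • P i).PosDef) :
    ∑ i, t i * (P i).trace ≤ Real.log (∑ i, Real.exp (t i) • P i).det := by
  set S := ∑ i, Real.exp (t i) • P i with hSdef
  let U : Matrix (Fin n) (Fin n) ℝ := hS.1.eigenvectorUnitary
  have hUU : Uᴴ * U = 1 := Unitary.coe_star_mul_self hS.1.eigenvectorUnitary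
  have hUU' : U * Uᴴ = 1 := Unitary.coe_mul_star_self hS.1.eigenvectorUnitary
  have hdiag : Uᴴ * S * U = diagonal hS.1.eigenvalues := by
    have h := hS.1.conjStarAlgAut_star_eigenvectorUnitary
    rw [Unitary.conjStarAlgAut_star_apply] at h
    exact h
  have hR : ∀ i, (Uᴴ * P i * U).PosSemidef := fun i => (hP i).conjTranspose_mul_mul_same U
  have hsum : ∀ j, ∑ i, (Uᴴ * P i * U) j j = 1 := by
    intro j
    have : ∑ i, Uᴴ * P i * U = 1 := by
      rw [← Finset.sum_mul, ← Finset.mul_sum, h1, mul_one, hUU]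
    have h2 := congrFun (congrFun this j) j
    rwa [Matrix.sum_apply, Matrix.one_apply_eq] at h2
  have heig : ∀ j, hS.1.eigenvalues j = ∑ i, (Uᴴ * P i * U) j j • Real.exp (t i) := by
    intro j
    have h2 := congrFun (congrFun hdiag j) j
    rw [diagonal_apply_eq] at h2
    rw [← h2, hSdef, Finset.mul_sum, Finset.sum_mul, Matrix.sum_apply]
    refine Finset.sum_congr rfl fun i _ => ?_
    simp [mul_comm]
  have hj : ∀ j, ∑ i, (Uᴴ * P i * U) j j * t i ≤ Real.log (hS.1.eigenvalues j) := by
    intro j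
    rw [heig j]
    have := strictConcaveOn_log_Ioi.concaveOn.le_map_sum (t := Finset.univ)
      (w := fun i => (Uᴴ * P i * U) j j) (p := fun i => Real.exp (t i))
      (fun i _ => (hR i).diag_nonneg) (hsum j) (fun i _ => Real.exp_pos _)
    simpa using this
  have hdet : Real.log S.det = ∑ j, Real.log (hS.1.eigenvalues j) := by
    rw [hS.1.det_eq_prod_eigenvalues]
    exact Real.log_prod (fun j _ => (hS.eigenvalues_pos j).ne')
  rw [hdet]
  refine le_trans (le_of_eq ?_) (Finset.sum_le_sum fun j _ => hj j)
  rw [Finset.sum_comm]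
  refine Finset.sum_congr rfl fun i _ => ?_
  rw [← Finset.sum_mul, mul_comm]
  congr 1
  have : (Uᴴ * P i * U).trace = (P i).trace := by
    rw [Matrix.trace_mul_cycle, hUU', one_mul]
  rw [← this]
  rfl

open scoped MatrixOrder in
theorem aux_factor {n : ℕ} (M : Matrix (Fin n) (Fin n) ℝ) (hM : M.PosDef) :
    ∃ B : Matrix (Fin n) (Fin n) ℝ, IsUnit B ∧ Bᴴ * M * B = 1 := by
  obtain ⟨y, hy, rfl⟩ := CStarAlgebra.isStrictlyPositive_iff_eq_star_mul_self.mp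
    hM.isStrictlyPositive
  have hd : IsUnit y.det := (Matrix.isUnit_iff_isUnit_det y).1 hy
  refine ⟨y⁻¹, by simpa using hy, ?_⟩
  rw [star_eq_conjTranspose, ← mul_assoc, ← conjTranspose_mul, mul_assoc,
    Matrix.mul_nonsing_inv _ hd]
  simp

theorem aux_support {n : ℕ} (Q : Fin n → Matrix (Fin n) (Fin n) ℝ)
    (hQ : ∀ i, (Q i).PosDef)
    (hpos : ∀ t : Fin n → ℝ, (∑ i, Real.exp (t i) • Q i).PosDef) (m : Fin n → ℝ) :
    ∃ g : Fin n → ℝ, ∀ s : Fin n → ℝ,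
      Real.log (∑ i, Real.exp (m i) • Q i).det + ∑ i, (s i - m i) * g i ≤
        Real.log (∑ i, Real.exp (s i) • Q i).det := by
  obtain ⟨B, hB, hB1⟩ := aux_factor _ (hpos m)
  have hBd : B.det ≠ 0 := ((Matrix.isUnit_iff_isUnit_det B).1 hB).ne_zero
  refine ⟨fun i => (Real.exp (m i) • (Bᴴ * Q i * B)).trace, fun s => ?_⟩
  have key : ∑ i, Real.exp (s i - m i) • (Real.exp (m i) • (Bᴴ * Q i * B)) =
      Bᴴ * (∑ i, Real.exp (s i) • Q i) * B := by
    rw [Finset.mul_sum, Finset.sum_mul]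
    refine Finset.sum_congr rfl fun i _ => ?_
    rw [smul_smul, ← Real.exp_add, sub_add_cancel]
    simp
  have h := aux_jensen (fun i => Real.exp (m i) • (Bᴴ * Q i * B))
    (fun i => ((hQ i).posSemidef.conjTranspose_mul_mul_same B).smul (Real.exp_pos _).le)
    (by
      rw [← hB1, Finset.mul_sum, Finset.sum_mul]
      refine Finset.sum_congr rfl fun i _ => ?_
      simp)
    (fun i => s i - m i)
    (by
      rw [key]
      exact (hpos s).conjTranspose_mul_mul_same (mulVec_injective_of_isUnit hB))
  rw [key] at h
  have e : ∀ t : Fin n → ℝ, Real.log (Bᴴ * (∑ i, Real.exp (t i) • Q i) * B).det =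
      Real.log (∑ i, Real.exp (t i) • Q i).det + 2 * Real.log B.det := by
    intro t
    have h0 := (hpos t).det_pos.ne'
    rw [det_mul, det_mul, det_conjTranspose, star_trivial,
      Real.log_mul (mul_ne_zero hBd h0) hBd, Real.log_mul hBd h0]
    ring
  have e1 := e m
  rw [hB1, det_one, Real.log_one] at e1
  rw [e s] at h
  linarith

/-- For symmetric positive definite matrices `Q₁, …, Qₙ`, the function
`f(t₁,…,tₙ) = log det(e^{t₁} Q₁ + ⋯ + e^{tₙ} Qₙ)` is convex on `ℝⁿ`. -/
theorem stmt_2 (n : ℕ) (Q : Fin n → Matrix (Fin n) (Fin n) ℝ)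
    (hQ : ∀ i, (Q i).PosDef) :
    ConvexOn ℝ Set.univ
      (fun t : Fin n → ℝ => Real.log (∑ i, Real.exp (t i) • Q i).det) := by
  refine ⟨convex_univ, fun x _ y _ a b ha hb hab => ?_⟩
  rcases Nat.eq_zero_or_pos n with rfl | hn
  · simp
  have : Nonempty (Fin n) := ⟨⟨0, hn⟩⟩
  have hpos : ∀ t : Fin n → ℝ, (∑ i, Real.exp (t i) • Q i).PosDef := fun t =>
    Matrix.posDef_sum Finset.univ_nonempty fun i _ => (hQ i).smul (Real.exp_pos _)
  obtain ⟨g, hg⟩ := aux_support Q hQ hpos (a • x + b • y)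
  have hx := mul_le_mul_of_nonneg_left (hg x) ha
  have hy := mul_le_mul_of_nonneg_left (hg y) hb
  have hz : a * ∑ i, (x i - (a • x + b • y) i) * g i +
      b * ∑ i, (y i - (a • x + b • y) i) * g i = 0 := by
    rw [Finset.mul_sum, Finset.mul_sum, ← Finset.sum_add_distrib]
    refine Finset.sum_eq_zero fun i _ => ?_
    simp only [Pi.add_apply, Pi.smul_apply, smul_eq_mul]
    obtain rfl : b = 1 - a := by linarith
    ring
  simp only [smul_eq_mul]
  generalize Real.log (∑ i, Real.exp ((a • x + b • y) i) • Q i).det = F at *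
  have hF : a * F + b * F = F := by rw [← add_mul, hab, one_mul]
  linarith
end

section
/- Let A₁, …, Aₙ be invertible n×n real matrices. Then there exists an invertible n×n real matrix Z such that (1/‖A₁Z‖_F²) Zᵀ A₁ᵀ A₁ Z + (1/‖A₂Z‖_F²) Zᵀ A₂ᵀ A₂ Z + ⋯ + (1/‖AₙZ‖_F²) Zᵀ Aₙᵀ Aₙ Z = I, where each summand (1/‖AᵢZ‖_F²) Zᵀ Aᵢᵀ Aᵢ Z has trace 1. -/
open Matrix

attribute [local instance] Matrix.normedAddCommGroup Matrix.normedSpace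

lemma aux_nonneg {n : ℕ} (B : Matrix (Fin n) (Fin n) ℝ) : 0 ≤ (Bᵀ * B).trace := by
  simp only [Matrix.trace, Matrix.diag, Matrix.mul_apply, Matrix.transpose_apply]
  exact Finset.sum_nonneg fun i _ => Finset.sum_nonneg fun j _ => mul_self_nonneg _

lemma aux_zero {n : ℕ} (B : Matrix (Fin n) (Fin n) ℝ) (h : (Bᵀ * B).trace = 0) : B = 0 := by
  have := (Matrix.trace_conjTranspose_mul_self_eq_zero_iff (A := B))
  rw [Matrix.conjTranspose_eq_transpose_of_trivial] at this
  exact this.1 h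

lemma aux_pos {n : ℕ} (A Z : Matrix (Fin n) (Fin n) ℝ) (hA : IsUnit A) (hZ : Z ≠ 0) :
    0 < ((A * Z)ᵀ * (A * Z)).trace := by
  refine lt_of_le_of_ne (aux_nonneg _) fun h => hZ ?_
  have := aux_zero _ h.symm
  exact (hA.mul_right_eq_zero).1 this

lemma aux_smul {n : ℕ} (A Z : Matrix (Fin n) (Fin n) ℝ) (c : ℝ) :
    ((A * (c • Z))ᵀ * (A * (c • Z))).trace = c ^ 2 * ((A * Z)ᵀ * (A * Z)).trace := by
  simp only [Matrix.mul_smul, Matrix.transpose_smul, Matrix.smul_mul, Matrix.trace_smul,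
    smul_eq_mul]
  ring

lemma aux_max_s13 {n : ℕ} (hn : 0 < n) (A : Fin n → Matrix (Fin n) (Fin n) ℝ)
    (hA : ∀ i, IsUnit (A i)) :
    ∃ Z : Matrix (Fin n) (Fin n) ℝ, IsUnit Z ∧ Z ≠ 0 ∧ ∀ W : Matrix (Fin n) (Fin n) ℝ,
      W.det ^ 2 * ∏ i, ((A i * Z)ᵀ * (A i * Z)).trace ≤
        Z.det ^ 2 * ∏ i, ((A i * W)ᵀ * (A i * W)).trace := by
  have : NeZero n := ⟨hn.ne'⟩
  let f : Matrix (Fin n) (Fin n) ℝ → ℝ := fun Z =>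
    Z.det ^ 2 / ∏ i, ((A i * Z)ᵀ * (A i * Z)).trace
  have hP : ∀ Z : Matrix (Fin n) (Fin n) ℝ, Z ≠ 0 →
      0 < ∏ i, ((A i * Z)ᵀ * (A i * Z)).trace := fun Z hZ =>
    Finset.prod_pos fun i _ => aux_pos _ _ (hA i) hZ
  have hhom : ∀ (c : ℝ) (Z : Matrix (Fin n) (Fin n) ℝ), c ≠ 0 → f (c • Z) = f Z := by
    intro c Z hc
    simp only [f, aux_smul, Finset.prod_mul_distrib, Matrix.det_smul, Finset.prod_const,
      Finset.card_univ, Fintype.card_fin, mul_pow]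
    rw [← pow_mul, ← pow_mul, mul_comm n 2]
    exact mul_div_mul_left _ _ (pow_ne_zero _ hc)
  have : ProperSpace (Matrix (Fin n) (Fin n) ℝ) := FiniteDimensional.proper ℝ _
  have hnorm : ∀ W : Matrix (Fin n) (Fin n) ℝ, W ≠ 0 → ‖W‖⁻¹ • W ∈ Metric.sphere 0 1 := by
    intro W hW
    rw [mem_sphere_zero_iff_norm, norm_smul, norm_inv, norm_norm]
    exact inv_mul_cancel₀ (norm_ne_zero_iff.2 hW)
  have h1 : (1 : Matrix (Fin n) (Fin n) ℝ) ≠ 0 := one_ne_zero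
  have hcont : ContinuousOn f (Metric.sphere 0 1) := by
    refine ContinuousOn.div ?_ ?_ ?_
    · exact ((continuous_id.matrix_det).pow 2).continuousOn
    · refine Continuous.continuousOn ?_
      refine continuous_finsetProd _ fun i _ => ?_
      have hc : Continuous fun Z : Matrix (Fin n) (Fin n) ℝ => A i * Z :=
        continuous_const.matrix_mul continuous_id
      exact (hc.matrix_transpose.matrix_mul hc).matrix_trace
    · intro Z hZ
      refine (hP Z ?_).ne'
      rintro rfl
      simp at hZ
  obtain ⟨Z, hZ, hmax⟩ := (isCompact_sphere (0 : Matrix (Fin n) (Fin n) ℝ) 1).exists_isMaxOn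
    ⟨_, hnorm 1 h1⟩ hcont
  have hZ0 : Z ≠ 0 := by
    rintro rfl
    simp at hZ
  have hall : ∀ W : Matrix (Fin n) (Fin n) ℝ, W ≠ 0 → f W ≤ f Z := by
    intro W hW
    rw [← hhom ‖W‖⁻¹ W (inv_ne_zero (norm_ne_zero_iff.2 hW))]
    exact hmax (hnorm W hW)
  have hfpos : 0 < f Z := by
    refine lt_of_lt_of_le ?_ (hall 1 h1)
    exact div_pos (by simp) (hP 1 h1)
  have hdet : Z.det ≠ 0 := by
    intro h
    simp [f, h] at hfpos
  refine ⟨Z, (Matrix.isUnit_iff_isUnit_det _).2 hdet.isUnit, hZ0, fun W => ?_⟩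
  by_cases hW : W = 0
  · subst hW
    simp [Matrix.det_zero, Finset.prod_const, hn.ne']
  · exact (div_le_div_iff₀ (hP W hW) (hP Z hZ0)).1 (hall W hW)

lemma aux_det {n : ℕ} (H : Matrix (Fin n) (Fin n) ℝ) :
    HasDerivAt (fun t : ℝ => (1 + t • H).det) H.trace 0 := by
  have h : (fun t : ℝ => (1 + t • H).det) = fun t =>
      (Polynomial.eval t (det (1 + (Polynomial.X : Polynomial ℝ) • H.map Polynomial.C))) := by
    funext t
    rw [← Polynomial.coe_evalRingHom, RingHom.map_det]
    congr 1
    ext i j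
    simp [Matrix.one_apply]
    split_ifs <;> simp [mul_comm]
  rw [h]
  have := Polynomial.hasDerivAt (det (1 + (Polynomial.X : Polynomial ℝ) • H.map Polynomial.C)) 0
  rwa [Matrix.derivative_det_one_add_X_smul] at this

lemma aux_quad {n : ℕ} (B H : Matrix (Fin n) (Fin n) ℝ) (t : ℝ) :
    ((B * (1 + t • H))ᵀ * (B * (1 + t • H))).trace =
      (Bᵀ * B).trace + t * (2 * (Bᵀ * B * H).trace) + t ^ 2 * ((B * H)ᵀ * (B * H)).trace := by
  have h1 : ((B * H)ᵀ * B).trace = (Bᵀ * B * H).trace := by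
    rw [← Matrix.trace_transpose, Matrix.transpose_mul, Matrix.transpose_transpose, Matrix.mul_assoc]
  simp only [Matrix.mul_add, Matrix.mul_one, Matrix.transpose_add, Matrix.add_mul,
    Matrix.trace_add, Matrix.mul_smul, Matrix.transpose_smul, Matrix.smul_mul,
    Matrix.trace_smul, smul_eq_mul, h1, ← Matrix.mul_assoc Bᵀ B H]
  ring

lemma aux_quad_deriv {n : ℕ} (B H : Matrix (Fin n) (Fin n) ℝ) :
    HasDerivAt (fun t : ℝ => ((B * (1 + t • H))ᵀ * (B * (1 + t • H))).trace)
      (2 * (Bᵀ * B * H).trace) 0 := by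
  simp only [aux_quad]
  have := (((hasDerivAt_id (0:ℝ)).mul_const (2 * (Bᵀ * B * H).trace)).const_add
    (Bᵀ * B).trace).add (((hasDerivAt_id (0:ℝ)).pow 2).mul_const ((B * H)ᵀ * (B * H)).trace)
  exact this.congr_deriv (by simp)

/-- For invertible `n×n` real matrices `A₁, …, Aₙ` there is an invertible
matrix `Z` with
`∑ᵢ (1/‖AᵢZ‖_F²) Zᵀ Aᵢᵀ Aᵢ Z = I`, each summand having trace `1`.
Here `‖AᵢZ‖_F² = Trace((AᵢZ)ᵀ (AᵢZ))` is the squared Frobenius norm. -/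
theorem stmt_13 (n : ℕ) (A : Fin n → Matrix (Fin n) (Fin n) ℝ)
    (hA : ∀ i, IsUnit (A i)) :
    ∃ Z : Matrix (Fin n) (Fin n) ℝ, IsUnit Z ∧
      (∀ i, ((((A i * Z)ᵀ * (A i * Z)).trace)⁻¹ •
          (Zᵀ * (A i)ᵀ * A i * Z)).trace = 1) ∧
      ∑ i, (((A i * Z)ᵀ * (A i * Z)).trace)⁻¹ • (Zᵀ * (A i)ᵀ * A i * Z) =
        (1 : Matrix (Fin n) (Fin n) ℝ) := by
  rcases Nat.eq_zero_or_pos n with rfl | hn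
  · exact ⟨1, isUnit_one, fun i => i.elim0, Subsingleton.elim _ _⟩
  obtain ⟨Z, hZ, hZ0, hmax⟩ := aux_max_s13 hn A hA
  have hpos : ∀ i, 0 < ((A i * Z)ᵀ * (A i * Z)).trace := fun i => aux_pos _ _ (hA i) hZ0
  have hassoc : ∀ i, Zᵀ * (A i)ᵀ * A i * Z = (A i * Z)ᵀ * (A i * Z) := by
    intro i
    simp only [Matrix.transpose_mul, Matrix.mul_assoc]
  refine ⟨Z, hZ, fun i => ?_, ?_⟩
  · rw [hassoc, Matrix.trace_smul, smul_eq_mul, inv_mul_cancel₀ (hpos i).ne']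
  simp only [hassoc]
  set N : Fin n → ℝ := fun i => ((A i * Z)ᵀ * (A i * Z)).trace with hN
  set M : Matrix (Fin n) (Fin n) ℝ := ∑ i, (N i)⁻¹ • ((A i * Z)ᵀ * (A i * Z)) with hM
  have hdet : 0 < Z.det ^ 2 := by
    have := ((Matrix.isUnit_iff_isUnit_det _).1 hZ).ne_zero
    positivity
  have key : ∀ H : Matrix (Fin n) (Fin n) ℝ, (M * H).trace = H.trace := by
    intro H
    let g : ℝ → ℝ := fun t =>
      (∏ i, (N i)⁻¹ * ((A i * Z * (1 + t • H))ᵀ * (A i * Z * (1 + t • H))).trace)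
        - (1 + t • H).det ^ 2
    have hg0 : g 0 = 0 := by
      simp only [g, zero_smul, add_zero, Matrix.mul_one, Matrix.det_one]
      rw [Finset.prod_eq_one fun i _ => inv_mul_cancel₀ (hpos i).ne']
      simp
    have hg : ∀ t, 0 ≤ g t := by
      intro t
      have h := hmax (Z * (1 + t • H))
      have hNp : 0 < ∏ i, N i := Finset.prod_pos fun i _ => hpos i
      simp only [Matrix.det_mul, mul_pow, ← Matrix.mul_assoc, mul_assoc (Z.det ^ 2)] at h
      have h := le_of_mul_le_mul_left h hdet
      simp only [g, sub_nonneg, Finset.prod_mul_distrib, Finset.prod_inv_distrib]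
      rw [inv_mul_eq_div, le_div_iff₀ hNp]
      simpa only [Matrix.mul_assoc] using h
    have hmin : IsLocalMin g 0 := Filter.Eventually.of_forall fun t => by rw [hg0]; exact hg t
    have hd1 := HasDerivAt.fun_finset_prod (u := Finset.univ) (x := (0:ℝ))
      (f := fun i t => (N i)⁻¹ * ((A i * Z * (1 + t • H))ᵀ * (A i * Z * (1 + t • H))).trace)
      (fun i _ => (aux_quad_deriv (A i * Z) H).const_mul (N i)⁻¹)
    have hd : HasDerivAt g _ 0 := hd1.sub ((aux_det H).pow 2)
    have h0 := hmin.hasDerivAt_eq_zero hd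
    have hone : ∀ i, (N i)⁻¹ * ((A i * Z)ᵀ * (A i * Z)).trace = 1 :=
      fun i => inv_mul_cancel₀ (hpos i).ne'
    simp only [zero_smul, add_zero, Matrix.mul_one, Matrix.det_one, hone, Finset.prod_const_one,
      one_smul, one_pow, mul_one] at h0
    have hMH : (M * H).trace = ∑ i, (N i)⁻¹ * ((A i * Z)ᵀ * (A i * Z) * H).trace := by
      simp only [hM, Finset.sum_mul, Matrix.trace_sum, Matrix.smul_mul, Matrix.trace_smul,
        smul_eq_mul]
    simp only [mul_left_comm _ (2:ℝ), ← Finset.mul_sum] at h0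
    rw [← hMH] at h0
    push_cast at h0
    linarith
  have hz : ((M - 1)ᵀᵀ * (M - 1)ᵀ).trace = 0 := by
    rw [Matrix.transpose_transpose, Matrix.sub_mul, Matrix.trace_sub, key, Matrix.one_mul, sub_self]
  have := aux_zero _ hz
  rw [Matrix.transpose_eq_zero] at this
  exact sub_eq_zero.1 this
end

section
/- Let X be an n×n random matrix whose entries are independent standard Gaussian random variables N(0,1). Then the expected absolute determinant of X equals 2^{n/2} Γ((n+1)/2) / √π; that is, the integral of |det M| over the space of n×n real matrices M with respect to the product of n² standard Gaussian measures equals 2^{n/2} Γ((n+1)/2) / √π. -/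
open Matrix MeasureTheory ProbabilityTheory

/-- The standard Gaussian on `Fin n → ℝ`. -/
noncomputable abbrev gam (n : ℕ) : Measure (Fin n → ℝ) := Measure.pi fun _ => gaussianReal 0 1

lemma exists_rot (n : ℕ) (v : Fin (n + 1) → ℝ) :
    ∃ f : (Fin (n + 1) → ℝ) →ₗ[ℝ] (Fin (n + 1) → ℝ), |LinearMap.det f| = 1 ∧
      MeasurePreserving f (gam (n + 1)) (gam (n + 1)) ∧
      f v = Pi.single 0 ‖WithLp.toLp 2 v‖ := by
  set w : EuclideanSpace ℝ (Fin (n + 1)) := WithLp.toLp 2 (Pi.single 0 ‖WithLp.toLp 2 v‖) with hw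
  have hnorm : ‖(WithLp.toLp 2 v : EuclideanSpace ℝ (Fin (n + 1)))‖ = ‖w‖ := by
    rw [hw]
    simp
  set R := Submodule.reflection (Submodule.span ℝ {(WithLp.toLp 2 v : EuclideanSpace ℝ (Fin (n + 1))) - w})ᗮ with hR
  let e : (EuclideanSpace ℝ (Fin (n + 1))) ≃ₗ[ℝ] (Fin (n + 1) → ℝ) := WithLp.linearEquiv 2 ℝ _
  refine ⟨e.toLinearMap ∘ₗ R.toLinearEquiv.toLinearMap ∘ₗ e.symm.toLinearMap, ?_, ?_, ?_⟩
  · rw [LinearMap.det_conj]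
    have := Submodule.det_reflection (𝕜 := ℝ) (Submodule.span ℝ {(WithLp.toLp 2 v : EuclideanSpace ℝ (Fin (n + 1))) - w})ᗮ
    rw [hR]
    erw [this]
    simp
  · have h1 : MeasurePreserving (WithLp.toLp 2) (gam (n + 1)) (stdGaussian (EuclideanSpace ℝ (Fin (n + 1)))) :=
      ⟨by fun_prop, map_pi_eq_stdGaussian⟩
    have h2 : MeasurePreserving R (stdGaussian (EuclideanSpace ℝ (Fin (n + 1)))) (stdGaussian (EuclideanSpace ℝ (Fin (n + 1)))) :=
      ⟨by fun_prop, stdGaussian_map R⟩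
    have h3 : MeasurePreserving (WithLp.ofLp) (stdGaussian (EuclideanSpace ℝ (Fin (n + 1)))) (gam (n + 1)) := by
      refine ⟨by fun_prop, ?_⟩
      rw [← map_pi_eq_stdGaussian, Measure.map_map (by fun_prop) (by fun_prop)]
      exact Measure.map_id
    exact h3.comp (h2.comp h1)
  · have := Submodule.reflection_sub hnorm
    show WithLp.ofLp (R (WithLp.toLp 2 v)) = _
    rw [hR, this]

lemma det_aux (n : ℕ) (v : Fin (n + 1) → ℝ) (f : (Fin (n + 1) → ℝ) →ₗ[ℝ] (Fin (n + 1) → ℝ))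
    (hf : |LinearMap.det f| = 1) (r : ℝ) (hr : 0 ≤ r) (hv : f v = Pi.single 0 r)
    (Y : Fin n → Fin (n + 1) → ℝ) :
    |(Matrix.of (Fin.cons v Y : Fin (n + 1) → Fin (n + 1) → ℝ)).det| =
      r * |(Matrix.of fun i j : Fin n => f (Y i) j.succ).det| := by
  have h := (Pi.basisFun ℝ (Fin (n+1))).det_comp f (Fin.cons v Y)
  rw [Pi.basisFun_det_apply, Pi.basisFun_det_apply] at h
  have h2 := congrArg abs h
  rw [abs_mul, hf, one_mul] at h2
  change _ = |(Matrix.of (Fin.cons v Y : Fin (n + 1) → Fin (n + 1) → ℝ)).det| at h2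
  rw [← h2, Matrix.det_succ_row_zero, Fin.sum_univ_succ]
  have h0 : ∀ j, (Matrix.of (f ∘ (Fin.cons v Y : Fin (n + 1) → Fin (n + 1) → ℝ))) 0 j
      = (Pi.single 0 r : Fin (n+1) → ℝ) j := by
    intro j
    simp [hv]
  simp only [h0]
  simp [abs_mul, abs_of_nonneg hr]
  left
  rfl

noncomputable def LL (n : ℕ) : ENNReal :=
  ∫⁻ M : Fin n → Fin n → ℝ, ENNReal.ofReal |(Matrix.of M).det| ∂(Measure.pi fun _ => gam n)

lemma meas_det (n : ℕ) : Measurable fun M : Fin n → Fin n → ℝ => ENNReal.ofReal |(Matrix.of M).det| := by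
  apply ENNReal.measurable_ofReal.comp
  apply Continuous.measurable
  apply continuous_abs.comp
  apply Continuous.matrix_det
  exact continuous_id

lemma mp_tail (n : ℕ) : MeasurePreserving (fun (x : Fin (n+1) → ℝ) (j : Fin n) => x j.succ) (gam (n+1)) (gam n) := by
  have h := measurePreserving_piFinSuccAbove (fun _ : Fin (n+1) => gaussianReal 0 1) 0
  exact (measurePreserving_snd (μ := gaussianReal 0 1) (ν := gam n)).comp h

lemma LL_succ (n : ℕ) : LL (n + 1) =
    (∫⁻ v : Fin (n+1) → ℝ, ENNReal.ofReal ‖WithLp.toLp 2 v‖ ∂(gam (n+1))) * LL n := by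
  have h := (measurePreserving_piFinSuccAbove (fun _ : Fin (n+1) => gam (n+1)) 0).symm
  rw [LL, ← h.lintegral_comp (meas_det _), lintegral_prod _ ?_, ← lintegral_mul_const _ ?_]
  · refine lintegral_congr fun v => ?_
    obtain ⟨f, h1, h2, h3⟩ := exists_rot n v
    have h4 := det_aux n v f h1 _ (norm_nonneg _) h3
    have h5 : ∀ Y : Fin n → Fin (n+1) → ℝ, ENNReal.ofReal |(Matrix.of ((MeasurableEquiv.piFinSuccAbove (fun _ => Fin (n+1) → ℝ) 0).symm (v, Y))).det|
        = ENNReal.ofReal ‖WithLp.toLp 2 v‖ * ENNReal.ofReal |(Matrix.of fun i j : Fin n => f (Y i) j.succ).det| := by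
      intro Y
      rw [← ENNReal.ofReal_mul (norm_nonneg _), ← h4]
      congr 
      simp [Fin.insertNthEquiv]
    refine (lintegral_congr h5).trans ?_
    have h6 : MeasurePreserving (fun (Y : Fin n → Fin (n+1) → ℝ) (i : Fin n) => fun j : Fin n => f (Y i) j.succ)
      (Measure.pi fun _ => gam (n+1)) (Measure.pi fun _ => gam n) :=
      measurePreserving_pi _ _ fun i => (mp_tail n).comp h2
    refine (lintegral_const_mul _ ((meas_det n).comp h6.measurable)).trans ?_
    congr 1
    exact h6.lintegral_comp (meas_det n)
  · fun_prop
  · exact ((meas_det _).comp h.measurable).aemeasurable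

lemma main_eq (n : ℕ) :  ∫ f : Fin n × Fin n → ℝ, |(Matrix.of fun i j => f (i, j)).det|
        ∂(Measure.pi fun _ : Fin n × Fin n => gaussianReal 0 1) = (LL n).toReal := by
  have h : MeasurePreserving (fun (f : Fin n × Fin n → ℝ) i j => f (i, j))
     (Measure.pi fun _ : Fin n × Fin n => gaussianReal 0 1) (Measure.pi fun _ => gam n) := by
    refine ⟨by fun_prop, ?_⟩
    have := Measure.infinitePi_map_curry (fun _ _ : Fin n => gaussianReal 0 1)
    simp only [Measure.infinitePi_eq_pi] at this
    exact this
  rw [integral_eq_lintegral_of_nonneg_ae]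
  · rw [LL, ← h.lintegral_comp (meas_det n)]
  · exact Filter.Eventually.of_forall fun _ => abs_nonneg _
  · apply Continuous.aestronglyMeasurable
    apply continuous_abs.comp
    apply Continuous.matrix_det
    fun_prop

lemma gam_density (n : ℕ) : gam n = (volume : Measure (Fin n → ℝ)).withDensity
    (fun x => ENNReal.ofReal (∏ i, gaussianPDFReal 0 1 (x i))) := by
  refine Measure.pi_eq fun s hs => ?_
  rw [withDensity_apply _ (MeasurableSet.univ_pi hs), volume_pi, Measure.restrict_pi_pi,
    ← ofReal_integral_eq_lintegral_ofReal, integral_fintype_prod_eq_prod (fun _ => gaussianPDFReal 0 1),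
    ENNReal.ofReal_prod_of_nonneg]
  · refine Finset.prod_congr rfl fun i _ => ?_
    rw [gaussianReal_apply_eq_integral _ one_ne_zero]
  · intro i _
    exact integral_nonneg fun x => gaussianPDFReal_nonneg _ _ _
  · exact Integrable.fintype_prod fun i => (integrable_gaussianPDFReal 0 1).restrict
  · exact Filter.Eventually.of_forall fun x => Finset.prod_nonneg fun i _ => gaussianPDFReal_nonneg _ _ _

lemma radial (n : ℕ) (g : ℝ → ℝ) :
    ∫ v : Fin (n+1) → ℝ, g ‖WithLp.toLp 2 v‖ ∂(gam (n+1)) =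
    ((n + 1) * (volume : Measure (EuclideanSpace ℝ (Fin (n+1)))).real (Metric.ball 0 1) *
      (√(2 * Real.pi))⁻¹ ^ (n+1)) *
     ∫ y in Set.Ioi (0:ℝ), y ^ n * (Real.exp (-(1/2) * y ^ (2:ℝ)) * g y) := by
  rw [gam_density, integral_withDensity_eq_integral_toReal_smul]
  · have h : ∀ x : Fin (n+1) → ℝ, (ENNReal.ofReal (∏ i, gaussianPDFReal 0 1 (x i))).toReal • g ‖WithLp.toLp 2 x‖
      = (√(2 * Real.pi))⁻¹ ^ (n+1) * ((fun y : ℝ => Real.exp (-(1/2) * y ^ (2:ℝ)) * g y) ‖WithLp.toLp 2 x‖) := by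
      intro x
      rw [ENNReal.toReal_ofReal (Finset.prod_nonneg fun i _ => gaussianPDFReal_nonneg _ _ _)]
      have : ‖WithLp.toLp 2 x‖ ^ (2:ℝ) = ∑ i, x i ^ 2 := by
        rw [Real.rpow_two, EuclideanSpace.real_norm_sq_eq]
      simp only [gaussianPDFReal, Finset.prod_mul_distrib, ← Real.exp_sum, this]
      simp [Finset.mul_sum, Finset.sum_neg_distrib, mul_assoc]
      left; left
      congr 1
      rw [← Finset.sum_neg_distrib]
      exact Finset.sum_congr rfl fun i _ => by ring
    simp_rw [h]
    rw [integral_const_mul]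
    have h2 := (PiLp.volume_preserving_toLp (Fin (n+1))).integral_comp
      (MeasurableEquiv.toLp 2 (Fin (n+1) → ℝ)).measurableEmbedding
      (fun x => (fun y : ℝ => Real.exp (-(1/2) * y ^ (2:ℝ)) * g y) ‖x‖)
    rw [h2]
    have h3 := integral_fun_norm_addHaar (volume : Measure (EuclideanSpace ℝ (Fin (n+1))))
      (fun y : ℝ => Real.exp (-(1/2) * y ^ (2:ℝ)) * g y)
    refine (congrArg _ h3).trans ?_
    simp
    ring
  · apply Measurable.ennreal_ofReal
    exact Finset.measurable_prod _ fun i _ => (measurable_gaussianPDFReal 0 1).comp (measurable_pi_apply i)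
  · simp

lemma norm_int (n : ℕ) : ∫ v : Fin (n+1) → ℝ, ‖WithLp.toLp 2 v‖ ∂(gam (n+1)) =
    √2 * Real.Gamma (((n:ℝ) + 2) / 2) / Real.Gamma (((n:ℝ) + 1) / 2) := by
  have h0 := radial n (fun _ => 1)
  have h1 := radial n (fun x => x)
  rw [h1]
  have a0 : ∫ y in Set.Ioi (0:ℝ), y ^ n * (Real.exp (-(1/2) * y ^ (2:ℝ)) * 1) = _ :=
    Eq.trans (by simp) (integral_rpow_mul_exp_neg_mul_rpow (p := 2) (q := n) (b := 1/2) (by norm_num)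
     (by linarith [n.cast_nonneg (α := ℝ)]) (by norm_num))
  have a1 : ∫ y in Set.Ioi (0:ℝ), y ^ n * (Real.exp (-(1/2) * y ^ (2:ℝ)) * y) = _ :=
    Eq.trans (by
      refine setIntegral_congr_fun measurableSet_Ioi (fun y _ => ?_)
      have : y ^ (((n+1:ℕ):ℝ)) = y ^ n * y := by rw [Real.rpow_natCast, pow_succ]
      simp only [this]; ring) (integral_rpow_mul_exp_neg_mul_rpow (p := 2) (q := (n+1:ℕ)) (b := 1/2) (by norm_num)
     (by linarith [(n+1).cast_nonneg (α := ℝ)]) (by norm_num))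
  rw [a1]
  rw [a0] at h0
  simp only [integral_const, probReal_univ, smul_eq_mul, mul_one] at h0
  set C := ((n + 1) * (volume : Measure (EuclideanSpace ℝ (Fin (n+1)))).real (Metric.ball 0 1) *
      (√(2 * Real.pi))⁻¹ ^ (n+1))
  have hG : 0 < Real.Gamma (((n:ℝ) + 1) / 2) := Real.Gamma_pos_of_pos (by positivity)
  have hp : ((1:ℝ)/2) ^ (-(((n+1:ℕ):ℝ) + 1) / 2) = √2 * ((1:ℝ)/2) ^ (-((n:ℝ) + 1) / 2) := by
    have : -(((n+1:ℕ):ℝ) + 1) / 2 = (-(1/2)) + -((n:ℝ) + 1) / 2 := by push_cast; ring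
    rw [this, Real.rpow_add (by norm_num), Real.sqrt_eq_rpow]
    congr 1
    rw [Real.rpow_neg (by norm_num), ← Real.inv_rpow (by norm_num)]
    norm_num
  have hc : (((n+1:ℕ):ℝ) + 1) / 2 = ((n:ℝ) + 2) / 2 := by push_cast; ring
  rw [hp, hc, eq_div_iff hG.ne']
  linear_combination (-√2 * Real.Gamma (((n:ℝ) + 2) / 2)) * h0

lemma norm_lint (n : ℕ) : ∫⁻ v : Fin (n+1) → ℝ, ENNReal.ofReal ‖WithLp.toLp 2 v‖ ∂(gam (n+1)) =
    ENNReal.ofReal (√2 * Real.Gamma (((n:ℝ) + 2) / 2) / Real.Gamma (((n:ℝ) + 1) / 2)) := by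
  rw [← norm_int, ofReal_integral_eq_lintegral_ofReal]
  · have h1 : MeasurePreserving (WithLp.toLp 2) (gam (n + 1)) (stdGaussian (EuclideanSpace ℝ (Fin (n + 1)))) :=
      ⟨by fun_prop, map_pi_eq_stdGaussian⟩
    have h2 : Integrable (fun x => ‖x‖) (stdGaussian (EuclideanSpace ℝ (Fin (n + 1)))) :=
      (IsGaussian.integrable_id (μ := stdGaussian (EuclideanSpace ℝ (Fin (n + 1))))).norm
    exact h1.integrable_comp_of_integrable h2
  · exact Filter.Eventually.of_forall fun _ => norm_nonneg _

lemma LL_eq (n : ℕ) : LL n = ENNReal.ofReal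
    ((2 : ℝ) ^ ((n : ℝ) / 2) * Real.Gamma (((n : ℝ) + 1) / 2) / Real.sqrt Real.pi) := by
  induction n with
  | zero =>
    have h : (0:ℝ) < √Real.pi := Real.sqrt_pos.2 Real.pi_pos
    have h2 : Real.Gamma (1/2) = √Real.pi := Real.Gamma_one_half_eq
    simp only [LL, Matrix.det_fin_zero]
    norm_num [h2, h.ne']
  | succ n ih =>
    have hG : 0 < Real.Gamma (((n:ℝ) + 1) / 2) := Real.Gamma_pos_of_pos (by positivity)
    have hG2 : 0 < Real.Gamma (((n:ℝ) + 2) / 2) := Real.Gamma_pos_of_pos (by positivity)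
    rw [LL_succ, ih, norm_lint, ← ENNReal.ofReal_mul (by positivity)]
    congr 1
    have h1 : (((n+1:ℕ):ℝ) + 1) / 2 = ((n:ℝ) + 2) / 2 := by push_cast; ring
    have h2 : ((n+1:ℕ):ℝ) / 2 = (1/2) + (n:ℝ)/2 := by push_cast; ring
    rw [h1, h2, Real.rpow_add (by norm_num), ← Real.sqrt_eq_rpow]
    field_simp

/-- If `X` is an `n×n` random matrix with independent standard Gaussian
entries, then `E|det X| = 2^{n/2} Γ((n+1)/2) / √π`. -/
theorem stmt_14 (n : ℕ) :
    ∫ f : Fin n × Fin n → ℝ, |(Matrix.of fun i j => f (i, j)).det|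
        ∂(Measure.pi fun _ : Fin n × Fin n => gaussianReal 0 1) =
      (2 : ℝ) ^ ((n : ℝ) / 2) * Real.Gamma (((n : ℝ) + 1) / 2) /
        Real.sqrt Real.pi := by
  rw [main_eq, LL_eq, ENNReal.toReal_ofReal]
  have hG : 0 < Real.Gamma (((n:ℝ) + 1) / 2) := Real.Gamma_pos_of_pos (by positivity)
  positivity
end
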